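/- arXiv:1110.1014 — 2 statements merged into one kernel-verified Lean document; each statement's English description precedes it below -/
import Mathlib

section
/- Let K be a bounded d-dimensional maximal lattice-free set in ℝ^d. Then K is a polytope and the relative interior of every facet of K contains at least one point of ℤ^d. -/
open Pointwise

/-- The standard integer lattice `ℤ^d` viewed as a subset of `ℝ^d`. -/
def intLattice (d : ℕ) : Set (Fin d → ℝ) :=
  Set.range (fun z : Fin d → ℤ => fun i => (z i : ℝ))

/-- A set `K ⊆ ℝ^d` is lattice-free if it is closed, convex, and its interior
contains no point of `ℤ^d`. -/
def IsLatticeFree (d : ℕ) (K : Set (Fin d → ℝ)) : Prop :=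
  IsClosed K ∧ Convex ℝ K ∧ interior K ∩ intLattice d = ∅

/-- A lattice-free set is maximal if it is not properly contained in another
lattice-free set. -/
def IsMaxLatticeFree (d : ℕ) (K : Set (Fin d → ℝ)) : Prop :=
  IsLatticeFree d K ∧ ∀ K' : Set (Fin d → ℝ), IsLatticeFree d K' → K ⊆ K' → K' = K

/-- The recession cone of `K`: all vectors `u` with `K + u ⊆ K`. -/
def recCone (d : ℕ) (K : Set (Fin d → ℝ)) : Set (Fin d → ℝ) :=
  {u | ∀ x ∈ K, x + u ∈ K}

/-- A polyhedron: an intersection of finitely many closed halfspaces. -/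
def IsPolyhedron (d : ℕ) (K : Set (Fin d → ℝ)) : Prop :=
  ∃ (n : ℕ) (a : Fin n → (Fin d → ℝ)) (b : Fin n → ℝ),
    K = {x | ∀ i, ∑ j, a i j * x j ≤ b i}

/-- A polytope: the convex hull of finitely many points. -/
def IsPolytope (d : ℕ) (K : Set (Fin d → ℝ)) : Prop :=
  ∃ s : Finset (Fin d → ℝ), K = convexHull ℝ (s : Set (Fin d → ℝ))

/-- A facet of a `d`-dimensional convex set `K ⊆ ℝ^d`: a nonempty convex
(extreme) face of dimension `d - 1`. -/
def IsFacet (d : ℕ) (K F : Set (Fin d → ℝ)) : Prop :=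
  F.Nonempty ∧ IsExtreme ℝ K F ∧ Convex ℝ F ∧
    Module.finrank ℝ (affineSpan ℝ F).direction + 1 = d

open Set Filter Topology

section Convexity

variable {E : Type*} [NormedAddCommGroup E] [NormedSpace ℝ E]

/-- A point lies strictly between `y` and any proper prolongation of the segment from `y` to it. -/
lemma mem_openSegment_prolongation (x y : E) {t : ℝ} (ht : 0 < t) :
    x ∈ openSegment ℝ y (x + t • (x - y)) := by
  refine ⟨t / (1 + t), 1 / (1 + t), by positivity, by positivity, by field_simp; ring, ?_⟩
  have h : (1 + t) ≠ 0 := by positivity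
  match_scalars
  · field_simp
    ring
  · field_simp

lemma tendsto_prolongation (x y : E) :
    Tendsto (fun t : ℝ => x + t • (x - y)) (𝓝[>] 0) (𝓝 x) := by
  have h : Continuous fun t : ℝ => x + t • (x - y) := by fun_prop
  have := h.tendsto 0
  simp only [zero_smul, add_zero] at this
  exact this.mono_left nhdsWithin_le_nhds

lemma prolongation_mem_affineSubspace {A : AffineSubspace ℝ E} {x y : E} (hx : x ∈ A) (hy : y ∈ A)
    (t : ℝ) : x + t • (x - y) ∈ A := by
  have := A.smul_vsub_vadd_mem t hx hy hx
  rwa [vsub_eq_sub, vadd_eq_add, add_comm] at this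

lemma mem_intrinsicInterior_iff_mem_nhdsWithin {F : Set E} {p : E} :
    p ∈ intrinsicInterior ℝ F ↔
      p ∈ affineSpan ℝ F ∧ F ∈ 𝓝[(affineSpan ℝ F : Set E)] p := by
  rw [mem_intrinsicInterior]
  constructor
  · rintro ⟨y, hy, rfl⟩
    refine ⟨y.2, ?_⟩
    rw [mem_interior_iff_mem_nhds] at hy
    exact preimage_coe_mem_nhds_subtype.1 hy
  · rintro ⟨hp, h⟩
    refine ⟨⟨p, hp⟩, ?_, rfl⟩
    rw [mem_interior_iff_mem_nhds]
    exact preimage_coe_mem_nhds_subtype.2 h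

lemma exists_prolongation_mem_of_mem_intrinsicInterior {F : Set E} {p q : E}
    (hp : p ∈ intrinsicInterior ℝ F) (hq : q ∈ affineSpan ℝ F) :
    ∃ t : ℝ, 0 < t ∧ p + t • (p - q) ∈ F := by
  obtain ⟨hpA, hF⟩ := mem_intrinsicInterior_iff_mem_nhdsWithin.1 hp
  have h : Tendsto (fun t : ℝ => p + t • (p - q)) (𝓝[>] 0) (𝓝[(affineSpan ℝ F : Set E)] p) :=
    tendsto_nhdsWithin_iff.2 ⟨tendsto_prolongation p q,
      Eventually.of_forall fun t => prolongation_mem_affineSubspace hpA hq t⟩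
  obtain ⟨t, ht, ht0⟩ := ((h.eventually hF).and self_mem_nhdsWithin).exists
  exact ⟨t, ht0, ht⟩

/-- If a segment starts in the relative interior of a convex set and ends in the set, then all its
interior points lie in the relative interior. -/
lemma Convex.mem_intrinsicInterior_of_prolongation_mem {F : Set E} (hF : Convex ℝ F) {p z : E}
    (hp : p ∈ intrinsicInterior ℝ F) {t : ℝ} (ht : 0 < t) (hw : z + t • (z - p) ∈ F) :
    z ∈ intrinsicInterior ℝ F := by
  obtain ⟨hpA, hpF⟩ := mem_intrinsicInterior_iff_mem_nhdsWithin.1 hp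
  have hzF : z ∈ F := hF.openSegment_subset (intrinsicInterior_subset hp) hw
    (mem_openSegment_prolongation z p ht)
  have hzA := subset_affineSpan ℝ F hzF
  refine mem_intrinsicInterior_iff_mem_nhdsWithin.2 ⟨hzA, ?_⟩
  let c : ℝ := (1 + t) / t
  have hc : Tendsto (fun y : E => p + c • (y - z)) (𝓝[(affineSpan ℝ F : Set E)] z)
      (𝓝[(affineSpan ℝ F : Set E)] p) := by
    refine tendsto_nhdsWithin_iff.2 ⟨?_, ?_⟩
    · have h : Continuous fun y : E => p + c • (y - z) := by fun_prop
      have := h.tendsto z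
      simp only [sub_self, smul_zero, add_zero] at this
      exact this.mono_left nhdsWithin_le_nhds
    · filter_upwards [self_mem_nhdsWithin] with y hy
      have := (affineSpan ℝ F).smul_vsub_vadd_mem c hy hzA hpA
      rwa [vsub_eq_sub, vadd_eq_add, add_comm] at this
  filter_upwards [hc hpF] with y hy
  have h1 : (1 + t) ≠ 0 := by positivity
  have h2 : t ≠ 0 := ht.ne'
  have hcomb := hF hy hw (a := t / (1 + t)) (b := 1 / (1 + t)) (by positivity) (by positivity)
    (by field_simp; ring)
  convert hcomb using 1
  simp only [c]
  match_scalars <;> field_simp <;> ring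

/-- A linear functional bounded on a set and attaining its bound in the relative interior
is constant on the set. -/
lemma eq_of_le_of_mem_intrinsicInterior {F : Set E} {f : StrongDual ℝ E} {b : ℝ}
    (hf : ∀ x ∈ F, f x ≤ b) {p : E} (hp : p ∈ intrinsicInterior ℝ F) (hpb : f p = b) :
    ∀ x ∈ F, f x = b := by
  intro x hx
  obtain ⟨t, ht, hw⟩ :=
    exists_prolongation_mem_of_mem_intrinsicInterior hp (subset_affineSpan ℝ F hx)
  have := hf _ hw
  simp only [map_add, map_smul, map_sub, smul_eq_mul, hpb] at this
  refine le_antisymm (hf x hx) ?_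
  nlinarith

/-- An extreme subset contains every point of the ambient set in its affine span, provided that
its relative interior is nonempty. -/
lemma IsExtreme.mem_of_mem_affineSpan {K F : Set E} (hF : IsExtreme ℝ K F) {p x : E}
    (hp : p ∈ intrinsicInterior ℝ F) (hx : x ∈ K) (hxA : x ∈ affineSpan ℝ F) : x ∈ F := by
  obtain ⟨t, ht, hw⟩ := exists_prolongation_mem_of_mem_intrinsicInterior hp hxA
  exact hF.left_mem_of_mem_openSegment hx (hF.subset hw) (intrinsicInterior_subset hp)
    (mem_openSegment_prolongation p x ht)

/-- An extreme subset meeting the interior is the whole set. -/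
lemma IsExtreme.eq_of_mem_interior {K F : Set E} (hF : IsExtreme ℝ K F) {p : E}
    (hp : p ∈ F) (hpK : p ∈ interior K) : F = K := by
  refine hF.subset.antisymm fun x hx => ?_
  obtain ⟨t, ht, ht0⟩ := (((tendsto_prolongation p x).eventually (mem_interior_iff_mem_nhds.1 hpK)).and
    self_mem_nhdsWithin).exists
  exact hF.left_mem_of_mem_openSegment hx ht hp (mem_openSegment_prolongation p x ht0)

/-- If every inequality active at `x` is active at `y`, then the segment from `y` to `x` can be
prolonged inside the polyhedron. -/
lemma exists_prolongation_mem_polyhedron {ι : Type*} {S : Set ι} (hS : S.Finite)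
    {f : ι → StrongDual ℝ E} {b : ι → ℝ} {x y : E} (hx : ∀ i ∈ S, f i x ≤ b i)
    (hxy : ∀ i ∈ S, f i x = b i → f i y = b i) :
    ∃ t : ℝ, 0 < t ∧ ∀ i ∈ S, f i (x + t • (x - y)) ≤ b i := by
  have h : ∀ᶠ t : ℝ in 𝓝[>] 0, ∀ i ∈ S, f i (x + t • (x - y)) ≤ b i := by
    rw [eventually_all_finite hS]
    intro i hi
    rcases (hx i hi).eq_or_lt with he | hlt
    · exact Eventually.of_forall fun t => by simp [he, hxy i hi he]
    · have := ((f i).continuous.tendsto x).comp (tendsto_prolongation x y)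
      exact (this.eventually_lt_const hlt).mono fun t ht => ht.le
  obtain ⟨t, ht, ht0⟩ := (h.and self_mem_nhdsWithin).exists
  exact ⟨t, ht0, ht⟩

lemma finite_extremePoints_polyhedron {ι : Type*} {S : Set ι} (hS : S.Finite)
    (f : ι → StrongDual ℝ E) (b : ι → ℝ) :
    ({x | ∀ i ∈ S, f i x ≤ b i}.extremePoints ℝ).Finite := by
  refine Finite.of_finite_image (f := fun x => {i ∈ S | f i x = b i})
    (hS.finite_subsets.subset ?_) ?_
  · rintro _ ⟨x, -, rfl⟩
    exact sep_subset _ _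
  · intro x hx y hy hxy
    obtain ⟨t, ht, hw⟩ := exists_prolongation_mem_polyhedron hS (y := y) hx.1 fun i hi he =>
      ((Set.ext_iff.1 hxy i).1 ⟨hi, he⟩).2
    exact (hx.2 hy.1 hw (mem_openSegment_prolongation x y ht)).symm

/-- A compact polyhedron is the convex hull of finitely many points. -/
lemma exists_finset_convexHull_eq_of_isCompact_polyhedron {ι : Type*} {S : Set ι} (hS : S.Finite)
    {f : ι → StrongDual ℝ E} {b : ι → ℝ} {K : Set E} (hK : K = {x | ∀ i ∈ S, f i x ≤ b i})
    (hc : IsCompact K) (hconv : Convex ℝ K) :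
    ∃ s : Finset E, K = convexHull ℝ (s : Set E) := by
  have hfin : (K.extremePoints ℝ).Finite := hK ▸ finite_extremePoints_polyhedron hS f b
  refine ⟨hfin.toFinset, ?_⟩
  rw [hfin.coe_toFinset]
  conv_lhs => rw [← closure_convexHull_extremePoints hc hconv]
  exact (hfin.isCompact_convexHull ℝ).isClosed.closure_eq

/-- A closed half-space through or missing `z` does not have `z` in its interior. -/
lemma notMem_interior_halfSpace {f : StrongDual ℝ E} (hf : f ≠ 0) {b : ℝ} {z : E}
    (hz : b ≤ f z) : z ∉ interior {x | f x ≤ b} := by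
  intro h
  obtain ⟨v, hv⟩ : ∃ v, 0 < f v := by
    obtain ⟨v, hv⟩ := DFunLike.ne_iff.1 hf
    rcases lt_or_gt_of_ne hv with h | h
    · exact ⟨-v, by simpa using h⟩
    · exact ⟨v, by simpa using h⟩
  obtain ⟨t, ht, ht0⟩ := (((tendsto_prolongation z (z - v)).eventually
    (mem_interior_iff_mem_nhds.1 h)).and self_mem_nhdsWithin).exists
  simp only [map_add, map_smul, smul_eq_mul, sub_sub_cancel] at ht
  nlinarith [mul_pos (mem_Ioi.1 ht0) hv]

/-- A convex set whose intersection with a large ball lies in a smaller ball, and which meets the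
smaller ball, lies in the large ball. -/
lemma Convex.subset_closedBall_of_inter_subset {Q : Set E} (hQ : Convex ℝ Q) {r R : ℝ}
    (hrR : r < R) (h : Q ∩ Metric.closedBall 0 R ⊆ Metric.closedBall 0 r)
    (hne : (Q ∩ Metric.closedBall 0 r).Nonempty) : Q ⊆ Metric.closedBall 0 R := by
  obtain ⟨k, hkQ, hkr⟩ := hne
  intro x hx
  by_contra hxR
  simp only [mem_closedBall_zero_iff, not_le] at hkr hxR
  have hcont : ContinuousOn (fun t : ℝ => ‖AffineMap.lineMap k x t‖) (Icc 0 1) :=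
    (AffineMap.lineMap_continuous.norm).continuousOn
  obtain ⟨t, ht, hteq⟩ := intermediate_value_Icc zero_le_one hcont
    (show R ∈ Icc _ _ by simp only [AffineMap.lineMap_apply_zero, AffineMap.lineMap_apply_one]
                         exact ⟨by linarith, hxR.le⟩)
  have hmem : AffineMap.lineMap k x t ∈ Q := hQ.lineMap_mem hkQ hx ht
  have := h ⟨hmem, by simpa using hteq.le⟩
  simp only [mem_closedBall_zero_iff] at this
  simp only at hteq
  linarith

/-- A hyperplane containing a set of codimension one lies in its affine span. -/
lemma mem_affineSpan_of_finrank_direction_add_one [FiniteDimensional ℝ E] {F : Set E}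
    (hF : Module.finrank ℝ (affineSpan ℝ F).direction + 1 = Module.finrank ℝ E)
    {f : StrongDual ℝ E} (hf0 : f ≠ 0) {b : ℝ} (hf : ∀ x ∈ F, f x = b) {p x : E} (hp : p ∈ F)
    (hx : f x = b) : x ∈ affineSpan ℝ F := by
  have hle : (affineSpan ℝ F).direction ≤ f.toLinearMap.ker := by
    rw [direction_affineSpan, vectorSpan_def, Submodule.span_le]
    rintro _ ⟨u, hu, v, hv, rfl⟩
    simp [hf u hu, hf v hv]
  have hrank : Module.finrank ℝ f.toLinearMap.ker + 1 = Module.finrank ℝ E :=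
    Module.Dual.finrank_ker_add_one_of_ne_zero (f := f.toLinearMap)
      fun h => hf0 (ContinuousLinearMap.coe_injective h)
  have heq := Submodule.eq_of_le_of_finrank_eq hle (by omega)
  have hpA := subset_affineSpan ℝ F hp
  have hmem : x - p ∈ (affineSpan ℝ F).direction := by
    rw [heq]
    simp [hx, hf p hp]
  simpa using AffineSubspace.vadd_mem_of_mem_direction hmem hpA

/-- A point outside the interior of a convex body is separated from the body by a half-space. -/
lemma Convex.exists_le_of_notMem_interior {K : Set E} (hK : Convex ℝ K)
    (hne : (interior K).Nonempty) {z : E} (hz : z ∉ interior K) :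
    ∃ f : StrongDual ℝ E, f ≠ 0 ∧ ∀ x ∈ K, f x ≤ f z := by
  obtain ⟨f, hf⟩ := geometric_hahn_banach_open_point hK.interior isOpen_interior hz
  refine ⟨f, ?_, ?_⟩
  · rintro rfl
    obtain ⟨x, hx⟩ := hne
    simpa using hf x hx
  · intro x hx
    have hcl : closure (interior K) ⊆ {x | f x ≤ f z} :=
      closure_minimal (fun y hy => (hf y hy).le) (isClosed_le f.continuous continuous_const)
    exact hcl ((hK.closure_interior_eq_closure_of_nonempty_interior hne).superset
      (subset_closure hx))

end Convexity

lemma finite_intLattice_inter_closedBall (d : ℕ) (R : ℝ) :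
    (intLattice d ∩ Metric.closedBall 0 R).Finite := by
  refine ((finite_Icc (fun _ : Fin d => -⌈R⌉) (fun _ => ⌈R⌉)).image
    (fun z : Fin d → ℤ => fun i => (z i : ℝ))).subset ?_
  rintro _ ⟨⟨z, rfl⟩, hz⟩
  refine ⟨z, ?_, rfl⟩
  rw [mem_closedBall_zero_iff] at hz
  have h : ∀ i, |(z i : ℝ)| ≤ ⌈R⌉ := fun i =>
    ((norm_le_pi_norm (fun i => (z i : ℝ)) i).trans hz).trans (Int.le_ceil R)
  exact ⟨fun i => by exact_mod_cast (abs_le.1 (h i)).1,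
    fun i => by exact_mod_cast (abs_le.1 (h i)).2⟩

/-- A bounded maximal lattice-free set is cut out by finitely many of the half-spaces of any family
separating the set from the lattice points. -/
lemma IsMaxLatticeFree.exists_finite_eq_polyhedron {d : ℕ} {K : Set (Fin d → ℝ)}
    (hK : IsMaxLatticeFree d K) (hbd : Bornology.IsBounded K) (hne : K.Nonempty)
    {f : (Fin d → ℝ) → StrongDual ℝ (Fin d → ℝ)} {b : (Fin d → ℝ) → ℝ}
    (hf0 : ∀ z ∈ intLattice d, f z ≠ 0) (hfK : ∀ z ∈ intLattice d, ∀ x ∈ K, f z x ≤ b z)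
    (hfz : ∀ z ∈ intLattice d, b z ≤ f z z) :
    ∃ S : Set (Fin d → ℝ), S.Finite ∧ S ⊆ intLattice d ∧ K = {x | ∀ z ∈ S, f z x ≤ b z} := by
  obtain ⟨r, hr⟩ := hbd.subset_closedBall 0
  have hrR : r < r + 1 := lt_add_one r
  set S := intLattice d ∩ Metric.closedBall (0 : Fin d → ℝ) (r + 1)
  have hQconv : Convex ℝ {x | ∀ z ∈ S, f z x ≤ b z} := by
    simp only [ofPred_forall]
    exact convex_iInter₂ fun z _ => convex_halfSpace_le (f z).isLinear (b z)
  have hQclosed : IsClosed {x | ∀ z ∈ S, f z x ≤ b z} := by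
    simp only [ofPred_forall]
    exact isClosed_biInter fun z _ => isClosed_le (f z).continuous continuous_const
  have hKQ : K ⊆ {x | ∀ z ∈ S, f z x ≤ b z} := fun x hx z hz => hfK z hz.1 x hx
  have hKR := hr.trans (Metric.closedBall_subset_closedBall hrR.le)
  have hfree : IsLatticeFree d ({x | ∀ z ∈ S, f z x ≤ b z} ∩ Metric.closedBall 0 (r + 1)) := by
    refine ⟨hQclosed.inter Metric.isClosed_closedBall, hQconv.inter (convex_closedBall _ _), ?_⟩
    refine eq_empty_of_forall_notMem ?_
    rintro z ⟨hzint, hz⟩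
    have hzS : z ∈ S := ⟨hz, (interior_subset hzint).2⟩
    exact notMem_interior_halfSpace (hf0 z hz) (hfz z hz)
      (interior_mono (fun x hx => hx.1 z hzS) hzint)
  have heq := hK.2 _ hfree (subset_inter hKQ hKR)
  refine ⟨S, finite_intLattice_inter_closedBall d _, inter_subset_left, hKQ.antisymm ?_⟩
  have hQR := hQconv.subset_closedBall_of_inter_subset hrR (heq.subset.trans hr)
    (hne.mono (subset_inter hKQ hr))
  exact fun x hx => heq.subset ⟨hx, hQR hx⟩

/-- A bounded `d`-dimensional maximal lattice-free set in `ℝ^d`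
is a polytope whose every facet has an integer point in its relative interior. -/
theorem stmt_15 (d : ℕ) (K : Set (Fin d → ℝ))
    (hK : IsMaxLatticeFree d K) (hdim : affineSpan ℝ K = ⊤)
    (hbd : Bornology.IsBounded K) :
    IsPolytope d K ∧
      ∀ F : Set (Fin d → ℝ), IsFacet d K F →
        (intrinsicInterior ℝ F ∩ intLattice d).Nonempty := by
  obtain ⟨⟨hclosed, hconv, hfree⟩, -⟩ := id hK
  have hint : (interior K).Nonempty := hconv.interior_nonempty_iff_affineSpan_eq_top.2 hdim
  have hne : K.Nonempty := hint.mono interior_subset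
  have hnot : ∀ z ∈ intLattice d, z ∉ interior K := fun z hz hzi =>
    eq_empty_iff_forall_notMem.1 hfree z ⟨hzi, hz⟩
  choose! f hf0 hfK using fun z hz => hconv.exists_le_of_notMem_interior hint (hnot z hz)
  obtain ⟨S, hSfin, hSL, hKS⟩ := hK.exists_finite_eq_polyhedron (b := fun z => f z z) hbd hne
    hf0 hfK fun z _ => le_rfl
  refine ⟨exists_finset_convexHull_eq_of_isCompact_polyhedron hSfin hKS
    (Metric.isCompact_of_isClosed_isBounded hclosed hbd) hconv, ?_⟩
  rintro F ⟨hFne, hFext, hFconv, hFrank⟩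
  by_contra hempty
  obtain ⟨p, hp⟩ := hFne.intrinsicInterior hFconv
  have hpF : p ∈ F := intrinsicInterior_subset hp
  have hpK : p ∈ K := hFext.subset hpF
  have hrank : Module.finrank ℝ (affineSpan ℝ F).direction + 1 = Module.finrank ℝ (Fin d → ℝ) := by
    simpa using hFrank
  have hsep : ∀ z ∈ intLattice d, ∃ (g : StrongDual ℝ (Fin d → ℝ)) (c : ℝ),
      g ≠ 0 ∧ (∀ x ∈ K, g x ≤ c) ∧ c ≤ g z ∧ g p < c := by
    intro z hz
    by_cases hzK : z ∈ K
    swap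
    · obtain ⟨g, c, hg, hgz⟩ := geometric_hahn_banach_closed_point hconv hclosed hzK
      refine ⟨g, c, ?_, fun x hx => (hg x hx).le, hgz.le, hg p hpK⟩
      rintro rfl
      have := hg p hpK
      simp only [zero_apply] at this hgz
      linarith
    have hzS : ∀ i ∈ S, f i z ≤ f i i := hKS.subset hzK
    by_cases hact : ∀ i ∈ S, f i z = f i i → f i p = f i i
    · exfalso
      obtain ⟨t, ht, hw⟩ := exists_prolongation_mem_polyhedron (b := fun i => f i i) hSfin hzS hact
      have hwK : z + t • (z - p) ∈ K := hKS.superset hw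
      obtain ⟨i, hiS, hi⟩ : ∃ i ∈ S, f i z = f i i := by
        by_contra! hlt
        refine hnot z hz (mem_interior_iff_mem_nhds.2 ?_)
        have : ∀ᶠ y in 𝓝 z, ∀ i ∈ S, f i y ≤ f i i := by
          rw [eventually_all_finite hSfin]
          exact fun i hi => (((f i).continuous.tendsto z).eventually_lt_const
            ((hzS i hi).lt_of_ne (hlt i hi))).mono fun y hy => hy.le
        rw [hKS]
        exact this
      have hip := hact i hiS hi
      have hFi := eq_of_le_of_mem_intrinsicInterior
        (fun x hx => hfK i (hSL hiS) x (hFext.subset hx)) hp hip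
      have hwA : z + t • (z - p) ∈ affineSpan ℝ F :=
        mem_affineSpan_of_finrank_direction_add_one hrank (hf0 i (hSL hiS)) hFi hpF
          (by simp [hi, hip])
      exact hempty ⟨z, hFconv.mem_intrinsicInterior_of_prolongation_mem hp ht
        (hFext.mem_of_mem_affineSpan hp hwK hwA), hz⟩
    · push Not at hact
      obtain ⟨i, hiS, hi, hip⟩ := hact
      exact ⟨f i, f i i, hf0 i (hSL hiS), hfK i (hSL hiS), hi.ge,
        (hfK i (hSL hiS) p hpK).lt_of_ne hip⟩
  choose! g c hg0 hgK hgz hgp using hsep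
  obtain ⟨T, hTfin, hTL, hKT⟩ := hK.exists_finite_eq_polyhedron hbd hne hg0 hgK hgz
  have hpint : p ∈ interior K := by
    have : ∀ᶠ y in 𝓝 p, ∀ z ∈ T, g z y ≤ c z := by
      rw [eventually_all_finite hTfin]
      exact fun z hz => (((g z).continuous.tendsto p).eventually_lt_const
        (hgp z (hTL hz))).mono fun y hy => hy.le
    rw [mem_interior_iff_mem_nhds, hKT]
    exact this
  rw [hFext.eq_of_mem_interior hpF hpint, hdim, AffineSubspace.direction_top, finrank_top] at hrank
  omega
end

section
/- Let K be a bounded d-dimensional maximal lattice-free set in ℝ^d. Then K is a polytope with at most 2^d facets. -/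
open Pointwise

section HalfspaceIntersection

variable {E : Type*} [NormedAddCommGroup E] [NormedSpace ℝ E]

/-- The intersection of the closed halfspaces `{x | f x ≤ c}` with `(f, c) ∈ S`. -/
def halfspaceInter (S : Finset ((E →L[ℝ] ℝ) × ℝ)) : Set E :=
  {x | ∀ p ∈ S, p.1 x ≤ p.2}

theorem isClosed_halfspaceInter (S : Finset ((E →L[ℝ] ℝ) × ℝ)) :
    IsClosed (halfspaceInter S) := by
  simp only [halfspaceInter, Set.ofPred_forall]
  exact isClosed_biInter fun p _ => isClosed_le p.1.continuous continuous_const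

theorem convex_halfspaceInter (S : Finset ((E →L[ℝ] ℝ) × ℝ)) :
    Convex ℝ (halfspaceInter S) := by
  simp only [halfspaceInter, Set.ofPred_forall]
  exact convex_iInter₂ fun p _ => convex_halfSpace_le p.1.toLinearMap.isLinear p.2

theorem exists_pos_add_smul_mem {A : Set E} {x : E} (hx : x ∈ interior A) (v : E) :
    ∃ ε : ℝ, 0 < ε ∧ x + ε • v ∈ A := by
  have hc : Filter.Tendsto (fun ε : ℝ => x + ε • v) (nhdsWithin 0 (Set.Ioi 0)) (nhds x) := by
    have : Continuous fun ε : ℝ => x + ε • v := by fun_prop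
    simpa using (this.tendsto 0).mono_left nhdsWithin_le_nhds
  obtain ⟨ε, h, hε⟩ :=
    ((hc.eventually (mem_interior_iff_mem_nhds.1 hx)).and self_mem_nhdsWithin).exists
  exact ⟨ε, hε, h⟩

theorem lt_of_mem_interior_of_le {A : Set E} {f : E →L[ℝ] ℝ} {c : ℝ} (hf : f ≠ 0)
    (hA : ∀ x ∈ A, f x ≤ c) {x : E} (hx : x ∈ interior A) : f x < c := by
  obtain ⟨v, hv⟩ : ∃ v, 0 < f v := by
    obtain ⟨v, hv⟩ : ∃ v, f v ≠ 0 := by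
      by_contra! h
      exact hf (ContinuousLinearMap.ext h)
    rcases lt_or_gt_of_ne hv with h | h
    · exact ⟨-v, by simpa using h⟩
    · exact ⟨v, h⟩
  obtain ⟨ε, hε, h⟩ := exists_pos_add_smul_mem hx v
  have := hA _ h
  simp only [map_add, map_smul, smul_eq_mul] at this
  nlinarith [mul_pos hε hv]

theorem lt_of_mem_interior_halfspaceInter {S : Finset ((E →L[ℝ] ℝ) × ℝ)} {x : E}
    (hx : x ∈ interior (halfspaceInter S)) {p : (E →L[ℝ] ℝ) × ℝ} (hp : p ∈ S) (h0 : p.1 ≠ 0) :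
    p.1 x < p.2 :=
  lt_of_mem_interior_of_le (A := halfspaceInter S) h0 (fun _ hy => hy p hp) hx

theorem mem_interior_halfspaceInter {S : Finset ((E →L[ℝ] ℝ) × ℝ)} {x : E}
    (hx : ∀ p ∈ S, p.1 x < p.2) : x ∈ interior (halfspaceInter S) := by
  refine mem_interior_iff_mem_nhds.2 ?_
  have : ∀ᶠ y in nhds x, ∀ p ∈ S, p.1 y < p.2 :=
    (Finset.eventually_all S).2 fun p hp =>
      (p.1.continuous.tendsto x).eventually_lt_const (hx p hp)
  exact this.mono fun y hy p hp => (hy p hp).le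

theorem mem_openSegment_add_smul_sub {x y : E} {ε : ℝ} (hε : 0 < ε) :
    x ∈ openSegment ℝ y (x + ε • (x - y)) := by
  have h : 0 < 1 + ε := by linarith
  refine ⟨ε / (1 + ε), 1 / (1 + ε), by positivity, by positivity, by field_simp; ring, ?_⟩
  match_scalars
  · field_simp
    ring
  · field_simp

/-- An extreme point of an intersection of halfspaces is determined by its active constraints. -/
theorem finite_extremePoints_halfspaceInter (S : Finset ((E →L[ℝ] ℝ) × ℝ)) :
    ((halfspaceInter S).extremePoints ℝ).Finite := by
  classical
  refine Set.Finite.of_injOn (f := fun x => S.filter fun p => p.1 x = p.2)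
    (t := (S.powerset : Set _)) ?_ ?_ (Finset.finite_toSet _)
  · intro x _
    exact Finset.mem_coe.2 (Finset.mem_powerset.2 (Finset.filter_subset _ _))
  · intro x hx y hy hxy
    have hact : ∀ p ∈ S, p.1 x = p.2 → p.1 y = p.2 := fun p hp h => by
      have : p ∈ S.filter fun p => p.1 y = p.2 := by
        rw [← show _ = S.filter fun p => p.1 y = p.2 from hxy]
        simp [hp, h]
      exact (Finset.mem_filter.1 this).2
    have hmem : x ∈ interior (halfspaceInter (S.filter fun p => p.1 x ≠ p.2)) :=
      mem_interior_halfspaceInter fun p hp => by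
        rw [Finset.mem_filter] at hp
        exact lt_of_le_of_ne (hx.1 p hp.1) hp.2
    obtain ⟨ε, hε, h⟩ := exists_pos_add_smul_mem hmem (x - y)
    have hz : x + ε • (x - y) ∈ halfspaceInter S := fun p hp => by
      by_cases hpx : p.1 x = p.2
      · simp [hpx, hact p hp hpx]
      · exact h p (Finset.mem_filter.2 ⟨hp, hpx⟩)
    exact (hx.2 hy.1 hz (mem_openSegment_add_smul_sub hε)).symm

/-- A face meeting the interior of a set is the whole set. -/
theorem IsExtreme.eq_of_mem_interior_s16 {A F : Set E} (hF : IsExtreme ℝ A F) {x : E} (hxF : x ∈ F)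
    (hx : x ∈ interior A) : F = A := by
  refine hF.1.antisymm fun y hy => ?_
  obtain ⟨ε, hε, h⟩ := exists_pos_add_smul_mem hx (x - y)
  exact hF.2 hy h hxF (mem_openSegment_add_smul_sub hε)

theorem Convex.exists_forall_lt {F : Set E} (hF : Convex ℝ F) (hne : F.Nonempty)
    (S : Finset ((E →L[ℝ] ℝ) × ℝ)) (hle : ∀ p ∈ S, ∀ x ∈ F, p.1 x ≤ p.2)
    (hlt : ∀ p ∈ S, ∃ x ∈ F, p.1 x < p.2) : ∃ x ∈ F, ∀ p ∈ S, p.1 x < p.2 := by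
  classical
  induction S using Finset.induction_on with
  | empty =>
    obtain ⟨x, hx⟩ := hne
    exact ⟨x, hx, by simp⟩
  | insert q S _ ih =>
    obtain ⟨x, hxF, hx⟩ := ih (fun p hp => hle p (Finset.mem_insert_of_mem hp))
      fun p hp => hlt p (Finset.mem_insert_of_mem hp)
    obtain ⟨y, hyF, hy⟩ := hlt q (Finset.mem_insert_self q S)
    refine ⟨(1 / 2 : ℝ) • x + (1 / 2 : ℝ) • y,
      hF hxF hyF (by norm_num) (by norm_num) (by norm_num), fun p hp => ?_⟩
    have hpx := hle p hp x hxF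
    have hpy := hle p hp y hyF
    simp only [map_add, map_smul, smul_eq_mul]
    rcases Finset.mem_insert.1 hp with rfl | hpS
    · linarith
    · linarith [hx p hpS]

/-- A convex face of codimension one is cut out by one of the defining hyperplanes. -/
theorem IsExtreme.exists_eq_inter_hyperplane [FiniteDimensional ℝ E]
    {S : Finset ((E →L[ℝ] ℝ) × ℝ)} (hS : ∀ p ∈ S, p.1 ≠ 0)
    (hint : (interior (halfspaceInter S)).Nonempty) {F : Set E} (hne : F.Nonempty)
    (hext : IsExtreme ℝ (halfspaceInter S) F) (hconv : Convex ℝ F)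
    (hdim : Module.finrank ℝ (affineSpan ℝ F).direction + 1 = Module.finrank ℝ E) :
    ∃ p ∈ S, F = halfspaceInter S ∩ {x | p.1 x = p.2} := by
  obtain ⟨p, hpS, hp⟩ : ∃ p ∈ S, ∀ x ∈ F, p.1 x = p.2 := by
    by_contra! h
    obtain ⟨x, hxF, hx⟩ := hconv.exists_forall_lt hne S (fun p hp x hx => hext.1 hx p hp)
      fun p hp => by
        obtain ⟨x, hx, hpx⟩ := h p hp
        exact ⟨x, hx, lt_of_le_of_ne (hext.1 hx p hp) hpx⟩
    have hFK := hext.eq_of_mem_interior_s16 hxF (mem_interior_halfspaceInter hx)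
    have htop : affineSpan ℝ F = ⊤ := by
      rw [hFK]
      exact (convex_halfspaceInter S).interior_nonempty_iff_affineSpan_eq_top.1 hint
    rw [htop, AffineSubspace.direction_top, finrank_top] at hdim
    omega
  refine ⟨p, hpS, Set.Subset.antisymm (fun x hx => ⟨hext.1 hx, hp x hx⟩) ?_⟩
  rintro y ⟨hyK, hyp⟩
  obtain ⟨x, hx⟩ := hne.intrinsicInterior hconv
  have hxF : x ∈ F := intrinsicInterior_subset hx
  have hle : (affineSpan ℝ F).direction ≤ LinearMap.ker p.1.toLinearMap := by
    rw [direction_affineSpan, vectorSpan_def, Submodule.span_le]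
    rintro _ ⟨a, ha, b, hb, rfl⟩
    simp [hp a ha, hp b hb]
  have heq : (affineSpan ℝ F).direction = LinearMap.ker p.1.toLinearMap := by
    refine Submodule.eq_of_le_of_finrank_le hle ?_
    have hlt : LinearMap.ker p.1.toLinearMap < ⊤ := by
      refine lt_top_iff_ne_top.2 fun h => hS p hpS ?_
      have := LinearMap.ker_eq_top.1 h
      ext v
      exact LinearMap.congr_fun this v
    have := Submodule.finrank_lt hlt.ne
    omega
  have hxA : x ∈ affineSpan ℝ F := subset_affineSpan ℝ F hxF
  have hline : ∀ ε : ℝ, x + ε • (x - y) ∈ affineSpan ℝ F := fun ε => by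
    have : ε • (x - y) ∈ (affineSpan ℝ F).direction := by
      rw [heq, LinearMap.mem_ker]
      simp [hp x hxF, show p.1 y = p.2 from hyp]
    simpa [add_comm] using AffineSubspace.vadd_mem_of_mem_direction this hxA
  obtain ⟨x', hx', hxx'⟩ := mem_intrinsicInterior.1 hx
  have hc : Filter.Tendsto
      (fun ε : ℝ => (⟨x + ε • (x - y), hline ε⟩ : affineSpan ℝ F)) (nhdsWithin 0 (Set.Ioi 0))
      (nhds x') := by
    have h : Continuous fun ε : ℝ => (⟨x + ε • (x - y), hline ε⟩ : affineSpan ℝ F) := by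
      fun_prop
    have h0 : (⟨x + (0 : ℝ) • (x - y), hline 0⟩ : affineSpan ℝ F) = x' :=
      Subtype.ext (by simp [hxx'])
    rw [← h0]
    exact (h.tendsto 0).mono_left nhdsWithin_le_nhds
  obtain ⟨ε, h, hε⟩ :=
    ((hc.eventually (mem_interior_iff_mem_nhds.1 hx')).and self_mem_nhdsWithin).exists
  exact hext.2 hyK (hext.1 h) hxF (mem_openSegment_add_smul_sub hε)

end HalfspaceIntersection

section LatticeFree

variable {d : ℕ}

theorem finite_intLattice_inter {B : Set (Fin d → ℝ)} (hB : Bornology.IsBounded B) :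
    (intLattice d ∩ B).Finite := by
  obtain ⟨R, hR⟩ := hB.exists_norm_le
  refine ((Set.finite_Icc (fun _ : Fin d => -⌈R⌉) fun _ => ⌈R⌉).image
    fun z : Fin d → ℤ => fun i => (z i : ℝ)).subset ?_
  rintro _ ⟨⟨z, rfl⟩, hz⟩
  refine ⟨z, ?_, rfl⟩
  have h : ∀ i, -⌈R⌉ ≤ z i ∧ z i ≤ ⌈R⌉ := fun i => by
    have h1 : |(z i : ℝ)| ≤ R := (norm_le_pi_norm (fun i => (z i : ℝ)) i).trans (hR _ hz)
    have h2 : |(z i : ℝ)| ≤ ⌈R⌉ := h1.trans (Int.le_ceil R)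
    exact abs_le.1 (by exact_mod_cast h2)
  exact ⟨fun i => (h i).1, fun i => (h i).2⟩

theorem isLatticeFree_halfspaceInter {S : Finset (((Fin d → ℝ) →L[ℝ] ℝ) × ℝ)}
    (h : ∀ z ∈ intLattice d, z ∉ interior (halfspaceInter S)) :
    IsLatticeFree d (halfspaceInter S) :=
  ⟨isClosed_halfspaceInter S, convex_halfspaceInter S,
    Set.eq_empty_of_forall_notMem fun z hz => h z hz.2 hz.1⟩

/-- A bounded full-dimensional maximal lattice-free set is an intersection of finitely many
halfspaces: those of a large box, and one for each lattice point in that box. -/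
theorem IsMaxLatticeFree.exists_eq_halfspaceInter {K : Set (Fin d → ℝ)}
    (hK : IsMaxLatticeFree d K) (hint : (interior K).Nonempty) (hbd : Bornology.IsBounded K) :
    ∃ S : Finset (((Fin d → ℝ) →L[ℝ] ℝ) × ℝ), (∀ p ∈ S, p.1 ≠ 0) ∧ K = halfspaceInter S := by
  classical
  obtain ⟨⟨hcl, hconv, hfree⟩, hmax⟩ := hK
  obtain ⟨R, hR⟩ := hbd.exists_norm_le
  have hsep : ∀ z ∈ intLattice d, ∃ f : (Fin d → ℝ) →L[ℝ] ℝ, f ≠ 0 ∧ ∀ x ∈ K, f x ≤ f z := by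
    intro z hz
    obtain ⟨f, hf⟩ := geometric_hahn_banach_open_point hconv.interior isOpen_interior
      fun h => (Set.eq_empty_iff_forall_notMem.1 hfree z ⟨h, hz⟩)
    refine ⟨f, ?_, fun x hx => ?_⟩
    · rintro rfl
      obtain ⟨x, hx⟩ := hint
      simpa using hf x hx
    · have hx' : x ∈ closure (interior K) := by
        rw [hconv.closure_interior_eq_closure_of_nonempty_interior hint]
        exact subset_closure hx
      exact closure_minimal (fun a ha => (hf a ha).le)
        (isClosed_le f.continuous continuous_const) hx'
  choose! f hf0 hfK using hsep
  have hfin : (intLattice d ∩ Set.Icc (fun _ => -R) fun _ => R).Finite :=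
    finite_intLattice_inter (Metric.isBounded_Icc _ _)
  set S : Finset (((Fin d → ℝ) →L[ℝ] ℝ) × ℝ) :=
    Finset.univ.image (fun i : Fin d => (ContinuousLinearMap.proj i, R)) ∪
      Finset.univ.image (fun i : Fin d => (-ContinuousLinearMap.proj i, R)) ∪
      hfin.toFinset.image (fun z => (f z, f z z)) with hSdef
  have hproj : ∀ i : Fin d, (ContinuousLinearMap.proj i : (Fin d → ℝ) →L[ℝ] ℝ) ≠ 0 :=
    fun i h => by simpa using congrArg (fun g => g (fun _ => (1 : ℝ))) h
  have hS0 : ∀ p ∈ S, p.1 ≠ 0 := by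
    intro p hp
    simp only [hSdef, Finset.mem_union, Finset.mem_image, Finset.mem_univ, true_and,
      Set.Finite.mem_toFinset] at hp
    rcases hp with (⟨i, rfl⟩ | ⟨i, rfl⟩) | ⟨z, hz, rfl⟩
    · exact hproj i
    · exact neg_ne_zero.2 (hproj i)
    · exact hf0 z hz.1
  refine ⟨S, hS0, (hmax _ (isLatticeFree_halfspaceInter fun z hz hzi => ?_) ?_).symm⟩
  · have hzS : z ∈ halfspaceInter S := interior_subset hzi
    have hzR : z ∈ Set.Icc (fun _ => -R) fun _ => R := by
      refine ⟨fun i => ?_, fun i => ?_⟩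
      · have := hzS (-ContinuousLinearMap.proj i, R) (by simp [hSdef])
        simp only [neg_apply, ContinuousLinearMap.proj_apply] at this
        linarith
      · exact hzS (ContinuousLinearMap.proj i, R) (by simp [hSdef])
    have hmem : (f z, f z z) ∈ S :=
      Finset.mem_union_right _ (Finset.mem_image_of_mem _ (hfin.mem_toFinset.2 ⟨hz, hzR⟩))
    exact lt_irrefl _ (lt_of_mem_interior_halfspaceInter hzi hmem (hf0 z hz))
  · intro x hx p hp
    have hxR : ∀ i, |x i| ≤ R := fun i => (norm_le_pi_norm x i).trans (hR x hx)
    simp only [hSdef, Finset.mem_union, Finset.mem_image, Finset.mem_univ, true_and,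
      Set.Finite.mem_toFinset] at hp
    rcases hp with (⟨i, rfl⟩ | ⟨i, rfl⟩) | ⟨z, hz, rfl⟩
    · exact (abs_le.1 (hxR i)).2
    · have := (abs_le.1 (hxR i)).1
      simp only [neg_apply, ContinuousLinearMap.proj_apply]
      linarith
    · exact hfK z hz.1 x hx

/-- Relaxing one constraint of a bounded intersection of halfspaces keeps it bounded. -/
theorem isBounded_halfspaceInter_erase_inter {E : Type*} [NormedAddCommGroup E] [NormedSpace ℝ E]
    [DecidableEq ((E →L[ℝ] ℝ) × ℝ)]
    {S : Finset ((E →L[ℝ] ℝ) × ℝ)} (hbd : Bornology.IsBounded (halfspaceInter S))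
    {x₀ : E} (hx₀ : ∀ p ∈ S, p.1 x₀ < p.2) {p : (E →L[ℝ] ℝ) × ℝ} (hp : p ∈ S) {t : ℝ}
    (ht : p.2 ≤ t) :
    Bornology.IsBounded (halfspaceInter (S.erase p) ∩ {x | p.1 x ≤ t}) := by
  have h0 : 0 < p.2 - p.1 x₀ := sub_pos.2 (hx₀ p hp)
  have h1 : 0 < t - p.1 x₀ := by linarith
  set s : ℝ := (p.2 - p.1 x₀) / (t - p.1 x₀) with hs
  have hs0 : 0 < s := div_pos h0 h1
  have hs1 : s ≤ 1 := (div_le_one h1).2 (by linarith)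
  obtain ⟨R, hR⟩ := hbd.exists_norm_le
  refine isBounded_iff_forall_norm_le.2 ⟨s⁻¹ * (R + (1 - s) * ‖x₀‖), ?_⟩
  rintro x ⟨hx, hxt⟩
  have hmem : (1 - s) • x₀ + s • x ∈ halfspaceInter S := by
    intro q hq
    simp only [map_add, map_smul, smul_eq_mul]
    by_cases hqp : q = p
    · subst hqp
      have hxt' : q.1 x ≤ t := hxt
      have hst : s * (t - q.1 x₀) = q.2 - q.1 x₀ := div_mul_cancel₀ _ h1.ne'
      nlinarith
    · have := hx q (Finset.mem_erase.2 ⟨hqp, hq⟩)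
      nlinarith [hx₀ q hq]
  have hsx : s * ‖x‖ ≤ R + (1 - s) * ‖x₀‖ := by
    calc s * ‖x‖ = ‖((1 - s) • x₀ + s • x) - (1 - s) • x₀‖ := by
          rw [add_sub_cancel_left, norm_smul, Real.norm_of_nonneg hs0.le]
      _ ≤ ‖(1 - s) • x₀ + s • x‖ + ‖(1 - s) • x₀‖ := norm_sub_le _ _
      _ ≤ R + (1 - s) * ‖x₀‖ := by
          rw [norm_smul, Real.norm_of_nonneg (sub_nonneg.2 hs1)]
          gcongr
          exact hR _ hmem
  rw [inv_mul_eq_div, le_div_iff₀ hs0]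
  linarith

/-- Each irredundant constraint of a maximal lattice-free polytope is attained at a lattice point
at which all other constraints are strict. -/
theorem IsMaxLatticeFree.exists_lattice_point_on_facet
    [DecidableEq (((Fin d → ℝ) →L[ℝ] ℝ) × ℝ)] {S : Finset (((Fin d → ℝ) →L[ℝ] ℝ) × ℝ)}
    (hK : IsMaxLatticeFree d (halfspaceInter S)) (hS : ∀ p ∈ S, p.1 ≠ 0)
    (hint : (interior (halfspaceInter S)).Nonempty)
    (hbd : Bornology.IsBounded (halfspaceInter S)) {p : ((Fin d → ℝ) →L[ℝ] ℝ) × ℝ} (hp : p ∈ S)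
    (hirr : halfspaceInter S ≠ halfspaceInter (S.erase p)) :
    ∃ z ∈ intLattice d, p.1 z = p.2 ∧ ∀ q ∈ S, q ≠ p → q.1 z < q.2 := by
  obtain ⟨x₀, hx₀i⟩ := hint
  have hx₀ : ∀ q ∈ S, q.1 x₀ < q.2 := fun q hq =>
    lt_of_mem_interior_halfspaceInter hx₀i hq (hS q hq)
  obtain ⟨y, hy, hyp⟩ : ∃ y ∈ halfspaceInter (S.erase p), p.2 < p.1 y := by
    by_contra! h
    refine hirr (Set.Subset.antisymm (fun x hx q hq => hx q (Finset.mem_of_mem_erase hq)) ?_)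
    intro x hx q hq
    by_cases hqp : q = p
    · exact hqp ▸ h x hx
    · exact hx q (Finset.mem_erase.2 ⟨hqp, hq⟩)
  -- Every relaxation `p.1 x ≤ t` of the constraint `p` produces an interior lattice point.
  have hrelax : ∀ t, p.2 < t → ∃ z ∈ intLattice d,
      (∀ q ∈ S, q ≠ p → q.1 z < q.2) ∧ p.2 ≤ p.1 z ∧ p.1 z < t := by
    intro t ht
    by_contra! hno
    set T := insert (p.1, t) (S.erase p) with hT
    have hT0 : ∀ q ∈ T, q.1 ≠ 0 := by
      intro q hq
      rcases Finset.mem_insert.1 hq with rfl | hq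
      · exact hS p hp
      · exact hS q (Finset.mem_of_mem_erase hq)
    have hsub : halfspaceInter S ⊆ halfspaceInter T := by
      intro x hx q hq
      rcases Finset.mem_insert.1 hq with rfl | hq
      · exact (hx p hp).trans ht.le
      · exact hx q (Finset.mem_of_mem_erase hq)
    have heq := hK.2 _ (isLatticeFree_halfspaceInter fun z hz hzi => ?_) hsub
    · -- a point of the segment from `x₀` to `y` slightly beyond the hyperplane of `p`
      have hlow := hx₀ p hp
      set u := min t (p.1 y) with hu
      have hu1 : p.2 < u := lt_min ht hyp
      have hD : 0 < p.1 y - p.1 x₀ := by linarith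
      set s := (u - p.1 x₀) / (p.1 y - p.1 x₀) with hs
      have hs0 : 0 ≤ s := div_nonneg (by linarith) hD.le
      have hs1 : s ≤ 1 := (div_le_one hD).2 (by linarith [min_le_right t (p.1 y)])
      have hval : p.1 ((1 - s) • x₀ + s • y) = u := by
        have : s * (p.1 y - p.1 x₀) = u - p.1 x₀ := div_mul_cancel₀ _ hD.ne'
        simp only [map_add, map_smul, smul_eq_mul]
        linarith
      have hmem : (1 - s) • x₀ + s • y ∈ halfspaceInter T := by
        intro q hq
        rcases Finset.mem_insert.1 hq with rfl | hq
        · exact hval.le.trans (min_le_left _ _)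
        · refine convex_halfspaceInter (S.erase p) (fun r hr => ?_) hy (sub_nonneg.2 hs1) hs0
            (by ring) q hq
          exact (hx₀ r (Finset.mem_of_mem_erase hr)).le
      rw [heq] at hmem
      exact absurd (hmem p hp) (by rw [hval]; exact not_le.2 hu1)
    · have hzT : ∀ q ∈ T, q.1 z < q.2 := fun q hq =>
        lt_of_mem_interior_halfspaceInter hzi hq (hT0 q hq)
      have hzS : ∀ q ∈ S, q ≠ p → q.1 z < q.2 := fun q hq hqp =>
        hzT q (Finset.mem_insert_of_mem (Finset.mem_erase.2 ⟨hqp, hq⟩))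
      rcases lt_or_ge (p.1 z) p.2 with h | h
      · refine Set.eq_empty_iff_forall_notMem.1 hK.1.2.2 z
          ⟨mem_interior_halfspaceInter fun q hq => ?_, hz⟩
        by_cases hqp : q = p
        · exact hqp ▸ h
        · exact hzS q hq hqp
      · exact absurd (hzT (p.1, t) (Finset.mem_insert_self _ _)) (not_lt.2 (hno z hz hzS h))
  -- By discreteness the infimum of the values `p.1 z` is attained.
  set Z := {z ∈ intLattice d | (∀ q ∈ S, q ≠ p → q.1 z < q.2) ∧ p.2 ≤ p.1 z ∧ p.1 z < p.2 + 1}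
    with hZ
  have hZfin : Z.Finite := by
    refine (finite_intLattice_inter (isBounded_halfspaceInter_erase_inter hbd hx₀ hp
      (t := p.2 + 1) (by linarith))).subset ?_
    rintro z ⟨hz, hzS, _, hz1⟩
    exact ⟨hz, fun q hq => (hzS q (Finset.mem_of_mem_erase hq) (Finset.ne_of_mem_erase hq)).le,
      hz1.le⟩
  have hZne : Z.Nonempty := hrelax (p.2 + 1) (by linarith)
  obtain ⟨z, hz, hzmin⟩ := Set.exists_min_image Z (fun z => p.1 z) hZfin hZne
  refine ⟨z, hz.1, ?_, hz.2.1⟩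
  by_contra hne
  obtain ⟨w, hw, hwS, hw1, hw2⟩ := hrelax (p.1 z) (lt_of_le_of_ne hz.2.2.1 (Ne.symm hne))
  exact absurd (hzmin w ⟨hw, hwS, hw1, hw2.trans hz.2.2.2⟩) (not_le.2 hw2)

/-- An irredundant description of a maximal lattice-free polytope has at most `2 ^ d` constraints:
lattice points on different facets have different parities. -/
theorem IsMaxLatticeFree.card_le_two_pow [DecidableEq (((Fin d → ℝ) →L[ℝ] ℝ) × ℝ)]
    {S : Finset (((Fin d → ℝ) →L[ℝ] ℝ) × ℝ)}
    (hK : IsMaxLatticeFree d (halfspaceInter S)) (hS : ∀ p ∈ S, p.1 ≠ 0)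
    (hint : (interior (halfspaceInter S)).Nonempty)
    (hbd : Bornology.IsBounded (halfspaceInter S))
    (hirr : ∀ p ∈ S, halfspaceInter S ≠ halfspaceInter (S.erase p)) :
    S.card ≤ 2 ^ d := by
  have hex : ∀ p ∈ S, ∃ z : Fin d → ℤ, p.1 (fun i => (z i : ℝ)) = p.2 ∧
      ∀ q ∈ S, q ≠ p → q.1 (fun i => (z i : ℝ)) < q.2 := by
    intro p hp
    obtain ⟨_, ⟨z, rfl⟩, hz⟩ := hK.exists_lattice_point_on_facet hS hint hbd hp (hirr p hp)
    exact ⟨z, hz⟩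
  choose! z hzeq hzlt using hex
  have hcard : (Finset.univ : Finset (Fin d → ZMod 2)).card = 2 ^ d := by
    simp [ZMod.card]
  rw [← hcard]
  refine Finset.card_le_card_of_injOn (fun p i => (z p i : ZMod 2)) (fun _ _ => by simp) ?_
  intro p hp q hq hpq
  by_contra hne
  have hdvd : ∀ i, (2 : ℤ) ∣ z q i - z p i := fun i =>
    (ZMod.intCast_eq_intCast_iff_dvd_sub _ _ 2).1 (congrFun hpq i)
  choose w hw using hdvd
  have hmid : (fun i => ((z p i + w i : ℤ) : ℝ)) =
      (1 / 2 : ℝ) • (fun i => (z p i : ℝ)) + (1 / 2 : ℝ) • fun i => (z q i : ℝ) := by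
    funext i
    have : (z q i : ℝ) - z p i = 2 * w i := by exact_mod_cast hw i
    simp only [Pi.add_apply, Pi.smul_apply, smul_eq_mul]
    push_cast
    linarith
  refine Set.eq_empty_iff_forall_notMem.1 hK.1.2.2 (fun i => ((z p i + w i : ℤ) : ℝ))
    ⟨mem_interior_halfspaceInter fun r hr => ?_, ⟨_, rfl⟩⟩
  rw [hmid]
  simp only [map_add, map_smul, smul_eq_mul]
  by_cases hrp : r = p
  · subst hrp
    linarith [hzeq r hr, hzlt q hq r hr hne]
  · have h1 := hzlt p hp r hr hrp
    by_cases hrq : r = q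
    · subst hrq
      linarith [hzeq r hr]
    · linarith [hzlt q hq r hr hrq]

end LatticeFree

/-- A bounded `d`-dimensional maximal lattice-free set in `ℝ^d`
is a polytope with at most `2^d` facets. -/
theorem stmt_16 (d : ℕ) (K : Set (Fin d → ℝ))
    (hK : IsMaxLatticeFree d K) (hdim : affineSpan ℝ K = ⊤)
    (hbd : Bornology.IsBounded K) :
    IsPolytope d K ∧ {F : Set (Fin d → ℝ) | IsFacet d K F}.Finite ∧
      {F : Set (Fin d → ℝ) | IsFacet d K F}.ncard ≤ 2 ^ d := by
  classical
  have hint : (interior K).Nonempty :=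
    hK.1.2.1.interior_nonempty_iff_affineSpan_eq_top.2 hdim
  obtain ⟨S, ⟨hS, hKS⟩, hmin⟩ := exists_minimal_of_wellFoundedLT
    (fun S : Finset (((Fin d → ℝ) →L[ℝ] ℝ) × ℝ) => (∀ p ∈ S, p.1 ≠ 0) ∧ K = halfspaceInter S)
    (hK.exists_eq_halfspaceInter hint hbd)
  have hirr : ∀ p ∈ S, K ≠ halfspaceInter (S.erase p) := fun p hp h =>
    Finset.notMem_erase p S
      (hmin ⟨fun q hq => hS q (Finset.mem_of_mem_erase hq), h⟩ (Finset.erase_subset p S) hp)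
  clear hmin
  subst hKS
  have hfacets : {F : Set (Fin d → ℝ) | IsFacet d (halfspaceInter S) F} ⊆
      (S.image fun p => halfspaceInter S ∩ {x | p.1 x = p.2} : Finset _) := by
    rintro F ⟨hne, hext, hconv, hrank⟩
    obtain ⟨p, hp, rfl⟩ := hext.exists_eq_inter_hyperplane hS hint hne hconv (by simpa using hrank)
    simp only [Finset.coe_image]
    exact ⟨p, hp, rfl⟩
  refine ⟨?_, (Finset.finite_toSet _).subset hfacets, ?_⟩
  · have hfin := finite_extremePoints_halfspaceInter S
    refine ⟨hfin.toFinset, ?_⟩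
    have hcomp : IsCompact (halfspaceInter S) := Metric.isCompact_of_isClosed_isBounded hK.1.1 hbd
    rw [hfin.coe_toFinset, ← (hfin.isClosed_convexHull ℝ).closure_eq,
      closure_convexHull_extremePoints hcomp hK.1.2.1]
  · calc {F : Set (Fin d → ℝ) | IsFacet d (halfspaceInter S) F}.ncard
        ≤ (S.image fun p => halfspaceInter S ∩ {x | p.1 x = p.2}).card := by
          rw [← Set.ncard_coe_finset]
          exact Set.ncard_le_ncard hfacets (Finset.finite_toSet _)
      _ ≤ S.card := Finset.card_image_le
      _ ≤ 2 ^ d := hK.card_le_two_pow hS hint hbd hirr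
end
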